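/- The family (I_δ)_{δ>0} is uniformly continuous in δ on the set where I₁ is finite: for every ε>0 there exists η>0 such that for all δ₁,δ₂∈(0,∞) with |δ₁−δ₂|<η, sup over μ∈𝒫(V) with I₁(μ)<∞ of |I_{δ₁}(μ)−I_{δ₂}(μ)| is at most ε. -/

import Mathlib

open scoped BigOperators Classical ENNReal
open Filter Topology

noncomputable section
namespace ORRW

/-- Probability measures on a finite type `A`, topologized as a subset of `ℝ^A`. -/
abbrev ProbMeas (A : Type) [Fintype A] : Type :=
  {p : A → ℝ // (∀ a, 0 ≤ p a) ∧ ∑ a, p a = 1}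

/-- Relative entropy `R(γ‖ρ)` between two finitely supported "rows", valued in `EReal`,
with `+∞` when absolute continuity fails. -/
def relEnt {A : Type} [Fintype A] (γ ρ : A → ℝ) : EReal :=
  if ∀ a, ρ a = 0 → γ a = 0 then ((∑ a, γ a * Real.log (γ a / ρ a) : ℝ) : EReal)
  else (⊤ : EReal)

/-- `∫ R(q‖p) dν = Σ_a ν(a) · R(q(a,·)‖p(a,·))`. -/
def relEntInt {A : Type} [Fintype A] (ν : A → ℝ) (q p : A → A → ℝ) : EReal :=
  ∑ a, (ν a : EReal) * relEnt (q a) (p a)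

/-- `ν` is an invariant measure of the kernel `q`. -/
def Invariant {A : Type} [Fintype A] (ν : A → ℝ) (q : A → A → ℝ) : Prop :=
  ∀ y, ∑ x, ν x * q x y = ν y

/-- Extended-real logarithm: `⊥` at nonpositive arguments. -/
def elog (x : ℝ) : EReal := if x ≤ 0 then (⊥ : EReal) else ((Real.log x : ℝ) : EReal)

/-- Empirical measure of a finite trajectory `f : Fin (n+1) → A`. -/
def empMeas {A : Type} [Fintype A] [DecidableEq A] (n : ℕ) (f : Fin (n + 1) → A) :
    ProbMeas A :=
  ⟨fun a => ((Finset.univ.filter (fun i => f i = a)).card : ℝ) / (n + 1),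
    fun a => by positivity, by
      have key : ∑ a : A, ((Finset.univ.filter (fun i => f i = a)).card) = n + 1 := by
        have h := Finset.card_eq_sum_card_fiberwise
          (s := (Finset.univ : Finset (Fin (n + 1)))) (t := (Finset.univ : Finset A))
          (f := f) (fun i _ => Finset.mem_univ (f i))
        simpa using h.symm
      have key' : ∑ a : A, (((Finset.univ.filter (fun i => f i = a)).card : ℝ)) = (n : ℝ) + 1 := by
        have h2 := congrArg (fun m : ℕ => (m : ℝ)) key
        push_cast at h2
        simpa using h2
      rw [← Finset.sum_div, key', div_self (by positivity)]⟩

section Graph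

variable {V : Type} [Fintype V] [DecidableEq V]

/-- Weight of an edge given the set `F` of already traversed edges. -/
def gw (δ : ℝ) (F : Finset (Sym2 V)) (e : Sym2 V) : ℝ := if e ∈ F then δ else 1

/-- The transition kernel `p̂_F` on `V`. -/
def phat (G : SimpleGraph V) [DecidableRel G.Adj] (δ : ℝ) (F : Finset (Sym2 V))
    (x y : V) : ℝ :=
  if G.Adj x y then gw δ F s(x, y) / ∑ z ∈ G.neighborFinset x, gw δ F s(x, z) else 0

/-- Two edges are adjacent iff they share a vertex. -/
def edgeAdj (e e' : Sym2 V) : Prop := ∃ v, v ∈ e ∧ v ∈ e'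

/-- `x` is a vertex of the edge set `F`. -/
def memVerts (F : Finset (Sym2 V)) (x : V) : Prop := ∃ e ∈ F, x ∈ e

/-- `𝒯_G`: stochastic matrices on `V` adapted to `G`. -/
def TG (G : SimpleGraph V) : Set (V → V → ℝ) :=
  {q | (∀ x y, 0 ≤ q x y) ∧ (∀ x, ∑ y, q x y = 1) ∧ ∀ x y, q x y ≠ 0 → G.Adj x y}

/-- `𝒯(F)`: stochastic kernels from the vertex set of `F` to `V`, supported on `F`. -/
def TE (F : Finset (Sym2 V)) : Set (V → V → ℝ) :=
  {q | (∀ x y, 0 ≤ q x y) ∧ (∀ x, memVerts F x → ∑ y, q x y = 1) ∧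
    ∀ x y, q x y ≠ 0 → s(x, y) ∈ F}

/-- `ℰ`: admissible increasing sequences of traversed edge sets. -/
def seqE (G : SimpleGraph V) [DecidableRel G.Adj] (v₁ : V) :
    Set (Fin G.edgeFinset.card → Finset (Sym2 V)) :=
  {Es | (∀ k, Es k ⊆ G.edgeFinset) ∧ (∀ k, (Es k).card = (k : ℕ) + 1) ∧
    (∀ k l : Fin G.edgeFinset.card, (k : ℕ) + 1 = (l : ℕ) → Es k ⊂ Es l) ∧
    (∀ k : Fin G.edgeFinset.card, (k : ℕ) = 0 → ∃ e ∈ Es k, v₁ ∈ e) ∧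
    (∀ k l : Fin G.edgeFinset.card, (k : ℕ) + 1 = (l : ℕ) →
      ∀ e ∈ Es l \ Es k, ∃ e' ∈ Es k, edgeAdj e e')}

/-- The rate function `I_δ`. -/
def Ifun (G : SimpleGraph V) [DecidableRel G.Adj] (v₁ : V) (δ : ℝ) (ν : ProbMeas V) : EReal :=
  sInf { c : EReal |
    ∃ (νs : Fin G.edgeFinset.card → ProbMeas V) (r : Fin G.edgeFinset.card → ℝ)
      (Es : Fin G.edgeFinset.card → Finset (Sym2 V))
      (qs : Fin G.edgeFinset.card → V → V → ℝ),
      Es ∈ seqE G v₁ ∧ (∀ k, 0 ≤ r k) ∧ (∑ k, r k = 1) ∧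
      (∀ k x, (νs k).1 x ≠ 0 → memVerts (Es k) x) ∧
      (∀ x, ∑ k, r k * (νs k).1 x = ν.1 x) ∧
      (∀ k, qs k ∈ TE (Es k)) ∧ (∀ k, Invariant (νs k).1 (qs k)) ∧
      c = ∑ k, ((r k : ℝ) : EReal) * relEntInt (νs k).1 (qs k) (phat G δ (Es k)) }

/-- Edges traversed along a path, given as a list of consecutively visited vertices. -/
def pathEdges : List V → Finset (Sym2 V)
  | [] => ∅
  | [_] => ∅
  | x :: y :: t => insert s(x, y) (pathEdges (y :: t))

/-- Product of one-step ORRW transition probabilities along a trajectory,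
the trajectory being listed in reverse chronological order. -/
def stepsProb (G : SimpleGraph V) [DecidableRel G.Adj] (δ : ℝ) : List V → ℝ
  | [] => 1
  | [_] => 1
  | y :: x :: t => phat G δ (pathEdges (x :: t).reverse) x y * stepsProb G δ (x :: t)

/-- The law of `(X_0, …, X_n)` for the `δ`-ORRW started at `v₁`. -/
def trajProb (G : SimpleGraph V) [DecidableRel G.Adj] (δ : ℝ) (v₁ : V) (n : ℕ)
    (f : Fin (n + 1) → V) : ℝ :=
  if f 0 = v₁ then stepsProb G δ (List.ofFn f).reverse else 0

/-- `P_{v₁}(L_{n+1} ∈ C)`: the probability that the empirical measure of the first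
`n+1` positions of the `δ`-ORRW lies in `C`. -/
def probEmp (G : SimpleGraph V) [DecidableRel G.Adj] (δ : ℝ) (v₁ : V) (n : ℕ)
    (C : Set (ProbMeas V)) : ℝ :=
  ∑ f : Fin (n + 1) → V, if empMeas n f ∈ C then trajProb G δ v₁ n f else 0

/-- The family `𝒮` of edge sets of connected subgraphs having an edge at `v₁`. -/
def scrS (G : SimpleGraph V) [DecidableRel G.Adj] (v₁ : V) : Set (Finset (Sym2 V)) :=
  {F | F ⊆ G.edgeFinset ∧ (∃ e ∈ F, v₁ ∈ e) ∧
    ∀ x y : V, memVerts F x → memVerts F y →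
      (SimpleGraph.fromEdgeSet (↑F : Set (Sym2 V))).Reachable x y}

/-- `𝒮₀` is a decreasing subset of `𝒮`. -/
def DecreasingIn (G : SimpleGraph V) [DecidableRel G.Adj] (v₁ : V)
    (S0 : Set (Finset (Sym2 V))) : Prop :=
  ∀ F₁ F₂, F₁ ∈ scrS G v₁ → F₂ ∈ scrS G v₁ → F₁ ⊆ F₂ → F₂ ∈ S0 → F₁ ∈ S0

/-- `P_{v₁}(T_{𝒮₀} > n)`. -/
def probTgt (G : SimpleGraph V) [DecidableRel G.Adj] (δ : ℝ) (v₁ : V)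
    (S0 : Set (Finset (Sym2 V))) (n : ℕ) : ℝ :=
  ∑ f : Fin (n + 1) → V,
    if ∀ k, 1 ≤ k → k ≤ n → pathEdges ((List.ofFn f).take (k + 1)) ∈ S0 then
      trajProb G δ v₁ n f
    else 0

/-- `P_{v₁}(C_E > n)` for the edge cover time `C_E`. -/
def probCgt (G : SimpleGraph V) [DecidableRel G.Adj] (δ : ℝ) (v₁ : V) (n : ℕ) : ℝ :=
  ∑ f : Fin (n + 1) → V,
    if ¬ G.edgeFinset ⊆ pathEdges (List.ofFn f) then trajProb G δ v₁ n f else 0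

/-- `E_{v₁}[exp (α T_{𝒮₀})]`, valued in `ℝ≥0∞`; the stopping time takes values in
`{1, 2, …} ∪ {∞}`. -/
def expT (G : SimpleGraph V) [DecidableRel G.Adj] (δ : ℝ) (v₁ : V)
    (S0 : Set (Finset (Sym2 V))) (α : ℝ) : ℝ≥0∞ :=
  (∑' n : ℕ, ENNReal.ofReal
      (Real.exp (α * (n + 1)) * (probTgt G δ v₁ S0 n - probTgt G δ v₁ S0 (n + 1)))) +
    (if 0 < α then (⊤ : ℝ≥0∞) else if α = 0 then 1 else 0) *
      ENNReal.ofReal (⨅ n : ℕ, probTgt G δ v₁ S0 n)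

/-- `E_{v₁}[exp (α C_E)]`, valued in `ℝ≥0∞`. -/
def expC (G : SimpleGraph V) [DecidableRel G.Adj] (δ : ℝ) (v₁ : V) (α : ℝ) : ℝ≥0∞ :=
  (∑' n : ℕ, ENNReal.ofReal
      (Real.exp (α * (n + 1)) * (probCgt G δ v₁ n - probCgt G δ v₁ (n + 1)))) +
    (if 0 < α then (⊤ : ℝ≥0∞) else if α = 0 then 1 else 0) *
      ENNReal.ofReal (⨅ n : ℕ, probCgt G δ v₁ n)

/-- The critical exponent `α_c(δ)` attached to a family `𝒮₀` of edge sets. -/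
def alphaC (G : SimpleGraph V) [DecidableRel G.Adj] (δ : ℝ)
    (S0 : Set (Finset (Sym2 V))) : EReal :=
  sInf { c : EReal | ∃ (ν : ProbMeas V) (F : Finset (Sym2 V)) (q : V → V → ℝ),
    F ∈ S0 ∧ q ∈ TE F ∧ (∀ x, ν.1 x ≠ 0 → memVerts F x) ∧ Invariant ν.1 q ∧
    c = relEntInt ν.1 q (phat G δ F) }

/-- `α_c^1(δ)`: the critical exponent for the cover time. -/
def alphaC1 (G : SimpleGraph V) [DecidableRel G.Adj] (v₁ : V) (δ : ℝ) : EReal :=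
  alphaC G δ (scrS G v₁ \ {G.edgeFinset})

end Graph

section Lifted

variable {V : Type} [Fintype V] [LinearOrder V]

/-- Smaller endpoint of an unordered pair. -/
def sym2lo (e : Sym2 V) : V := Sym2.lift ⟨fun a b => min a b, fun a b => min_comm a b⟩ e

/-- Larger endpoint of an unordered pair. -/
def sym2hi (e : Sym2 V) : V := Sym2.lift ⟨fun a b => max a b, fun a b => max_comm a b⟩ e

/-- `V_S = E × {-1, 1}`: vertex set of the lifted directed graph `S`
(`true` plays the role of `+1`). -/
abbrev VSet (G : SimpleGraph V) [DecidableRel G.Adj] : Type :=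
  {e : Sym2 V // e ∈ G.edgeFinset} × Bool

/-- Tail `z⁻` of an oriented edge. -/
def zm (G : SimpleGraph V) [DecidableRel G.Adj] (z : VSet G) : V :=
  if z.2 then sym2lo z.1.1 else sym2hi z.1.1

/-- Head `z⁺` of an oriented edge. -/
def zp (G : SimpleGraph V) [DecidableRel G.Adj] (z : VSet G) : V :=
  if z.2 then sym2hi z.1.1 else sym2lo z.1.1

/-- The kernel `p_F` on the lifted directed graph `S`. -/
def pS (G : SimpleGraph V) [DecidableRel G.Adj] (δ : ℝ) (F : Finset (Sym2 V))
    (z₁ z₂ : VSet G) : ℝ :=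
  if zp G z₁ = zm G z₂ then
    gw δ F z₂.1.1 / ∑ w : VSet G, (if zp G z₁ = zm G w then gw δ F w.1.1 else 0)
  else 0

/-- `𝒯_S`: stochastic matrices on `V_S` moving along orientations. -/
def TS (G : SimpleGraph V) [DecidableRel G.Adj] : Set (VSet G → VSet G → ℝ) :=
  {q | (∀ z w, 0 ≤ q z w) ∧ (∀ z, ∑ w, q z w = 1) ∧ ∀ z w, q z w ≠ 0 → zp G z = zm G w}

/-- `𝒞(𝒮₀)`: probability measures on `V_S` whose first marginal is supported in
some member of `𝒮₀`. -/
def CC (G : SimpleGraph V) [DecidableRel G.Adj] (S0 : Set (Finset (Sym2 V))) :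
    Set (ProbMeas (VSet G)) :=
  {μ | ∃ F ∈ S0, ∀ z : VSet G, μ.1 z ≠ 0 → z.1.1 ∈ F}

/-- `Λ_{δ,𝒮₀}`. -/
def Lam (G : SimpleGraph V) [DecidableRel G.Adj] (v₁ : V) (δ : ℝ)
    (S0 : Set (Finset (Sym2 V))) (μ : ProbMeas (VSet G)) : EReal :=
  sInf { c : EReal |
    ∃ (μs : Fin G.edgeFinset.card → ProbMeas (VSet G)) (r : Fin G.edgeFinset.card → ℝ)
      (Es : Fin G.edgeFinset.card → Finset (Sym2 V))
      (qs : Fin G.edgeFinset.card → VSet G → VSet G → ℝ),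
      Es ∈ seqE G v₁ ∧ (∀ k, 0 ≤ r k) ∧ (∀ k, Es k ∉ S0 → r k = 0) ∧ (∑ k, r k = 1) ∧
      (∀ k z, (μs k).1 z ≠ 0 → z.1.1 ∈ Es k) ∧
      (∀ z, ∑ k, r k * (μs k).1 z = μ.1 z) ∧
      (∀ k, qs k ∈ TS G) ∧ (∀ k, Invariant (μs k).1 (qs k)) ∧
      c = ∑ k, ((r k : ℝ) : EReal) * relEntInt (μs k).1 (qs k) (pS G δ (Es k)) }

/-- `Λ^z_{δ,𝒮₀}`. -/
def LamZ (G : SimpleGraph V) [DecidableRel G.Adj] (v₁ : V) (δ : ℝ)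
    (S0 : Set (Finset (Sym2 V))) (z : VSet G) (μ : ProbMeas (VSet G)) : EReal :=
  sInf { c : EReal |
    ∃ (μs : Fin G.edgeFinset.card → ProbMeas (VSet G)) (r : Fin G.edgeFinset.card → ℝ)
      (Es : Fin G.edgeFinset.card → Finset (Sym2 V))
      (qs : Fin G.edgeFinset.card → VSet G → VSet G → ℝ),
      Es ∈ seqE G v₁ ∧ (∀ k : Fin G.edgeFinset.card, (k : ℕ) = 0 → Es k = {z.1.1}) ∧
      (∀ k, 0 ≤ r k) ∧ (∀ k, Es k ∉ S0 → r k = 0) ∧ (∑ k, r k = 1) ∧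
      (∀ k w, (μs k).1 w ≠ 0 → w.1.1 ∈ Es k) ∧
      (∀ w, ∑ k, r k * (μs k).1 w = μ.1 w) ∧
      (∀ k, qs k ∈ TS G) ∧ (∀ k, Invariant (μs k).1 (qs k)) ∧
      c = ∑ k, ((r k : ℝ) : EReal) * relEntInt (μs k).1 (qs k) (pS G δ (Es k)) }

/-- `Λ₁`: the Donsker–Varadhan functional for the simple random walk on `S`
(whose kernel is `pS` with `δ = 1`). -/
def Lam1 (G : SimpleGraph V) [DecidableRel G.Adj] (μ : ProbMeas (VSet G)) : EReal :=
  sInf { c : EReal | ∃ q ∈ TS G, Invariant μ.1 q ∧ c = relEntInt μ.1 q (pS G 1 ∅) }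

/-- Boundary `∂F` of an edge set: edges of `F` adjacent to some edge outside `F`. -/
def bdry (G : SimpleGraph V) [DecidableRel G.Adj] (F : Finset (Sym2 V)) : Finset (Sym2 V) :=
  F.filter fun e => ∃ e' ∈ G.edgeFinset \ F, edgeAdj e e'

/-- Out-degree `d(z)` of `z` in `S`. -/
def outDeg (G : SimpleGraph V) [DecidableRel G.Adj] (z : VSet G) : ℕ :=
  (Finset.univ.filter (fun w : VSet G => zp G z = zm G w)).card

/-- Number `k(z)` of out-neighbours of `z` lying in `F × {-1, 1}`. -/
def outDegIn (G : SimpleGraph V) [DecidableRel G.Adj] (F : Finset (Sym2 V))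
    (z : VSet G) : ℕ :=
  (Finset.univ.filter (fun w : VSet G => zp G z = zm G w ∧ w.1.1 ∈ F)).card

/-- The law of `(Z_0, …, Z_n)` for the lifted `δ`-ORRW conditioned on `Z_0 = z`. -/
def liftTraj (G : SimpleGraph V) [DecidableRel G.Adj] (δ : ℝ) (z : VSet G) (n : ℕ)
    (g : Fin (n + 1) → VSet G) : ℝ :=
  if g 0 = z then
    ∏ i : Fin n,
      pS G δ ((Finset.Iic i.castSucc).image (fun j => (g j).1.1))
        (g i.castSucc) (g i.succ)
  else 0

/-- The restricted logarithmic Laplace functional `W^{n+1}_{𝒮₀}(z)`. -/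
def Wres (G : SimpleGraph V) [DecidableRel G.Adj] (δ : ℝ) (z : VSet G)
    (S0 : Set (Finset (Sym2 V))) (h : ProbMeas (VSet G) → ℝ) (n : ℕ) : EReal :=
  if 0 < ∑ g : Fin (n + 1) → VSet G,
      (if empMeas n g ∈ CC G S0 then liftTraj G δ z n g else 0) then
    ((-((((n : ℝ) + 1))⁻¹ * Real.log (∑ g : Fin (n + 1) → VSet G,
      if empMeas n g ∈ CC G S0 then
        Real.exp (-((n : ℝ) + 1) * h (empMeas n g)) * liftTraj G δ z n g
      else 0)) : ℝ) : EReal)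
  else (⊤ : EReal)

end Lifted

/-- Real-valued cost of one row family. -/
def rc {A : Type} [Fintype A] (ν : A → ℝ) (q p : A → A → ℝ) : ℝ :=
  ∑ x, ν x * ∑ y, q x y * Real.log (q x y / p x y)

section Aux
variable {V : Type} [Fintype V] [DecidableEq V]

lemma coe_sum_EReal {ι : Type*} (s : Finset ι) (f : ι → ℝ) :
    ((∑ i ∈ s, f i : ℝ) : EReal) = ∑ i ∈ s, (f i : EReal) := by
  induction s using Finset.induction_on with
  | empty => simp
  | insert a s ha ih => rw [Finset.sum_insert ha, Finset.sum_insert ha, EReal.coe_add, ih]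

lemma gw_pos {δ : ℝ} (h : 0 < δ) (F : Finset (Sym2 V)) (e : Sym2 V) : 0 < gw δ F e := by
  unfold gw; split_ifs <;> linarith

lemma den_pos (G : SimpleGraph V) [DecidableRel G.Adj] {δ : ℝ} (h : 0 < δ)
    (F : Finset (Sym2 V)) {x y : V} (hxy : G.Adj x y) :
    0 < ∑ z ∈ G.neighborFinset x, gw δ F s(x, z) :=
  Finset.sum_pos (fun z _ => gw_pos h F _) ⟨y, by simpa using hxy⟩

lemma phat_pos (G : SimpleGraph V) [DecidableRel G.Adj] {δ : ℝ} (h : 0 < δ)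
    (F : Finset (Sym2 V)) {x y : V} (hxy : G.Adj x y) : 0 < phat G δ F x y := by
  unfold phat
  rw [if_pos hxy]
  exact div_pos (gw_pos h F _) (den_pos G h F hxy)

lemma relEntInt_eq (G : SimpleGraph V) [DecidableRel G.Adj] {δ : ℝ} (h : 0 < δ)
    (F : Finset (Sym2 V)) (hF : F ⊆ G.edgeFinset) (ν : V → ℝ) (q : V → V → ℝ)
    (hq : q ∈ TE F) :
    relEntInt ν q (phat G δ F) = ((rc ν q (phat G δ F) : ℝ) : EReal) := by
  unfold relEntInt rc
  rw [coe_sum_EReal]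
  refine Finset.sum_congr rfl fun x _ => ?_
  rw [EReal.coe_mul]
  congr 1
  unfold relEnt
  rw [if_pos]
  intro y hy
  by_contra hne
  have hadj : G.Adj x y := by simpa using hF (hq.2.2 x y hne)
  exact (phat_pos G h F hadj).ne' hy

lemma cost_eq (G : SimpleGraph V) [DecidableRel G.Adj] {δ : ℝ} (h : 0 < δ)
    (Es : Fin G.edgeFinset.card → Finset (Sym2 V)) (hE : ∀ k, Es k ⊆ G.edgeFinset)
    (νs : Fin G.edgeFinset.card → ProbMeas V) (r : Fin G.edgeFinset.card → ℝ)
    (qs : Fin G.edgeFinset.card → V → V → ℝ) (hq : ∀ k, qs k ∈ TE (Es k)) :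
    ∑ k, ((r k : ℝ) : EReal) * relEntInt (νs k).1 (qs k) (phat G δ (Es k)) =
      ((∑ k, r k * rc (νs k).1 (qs k) (phat G δ (Es k)) : ℝ) : EReal) := by
  rw [coe_sum_EReal]
  refine Finset.sum_congr rfl fun k _ => ?_
  rw [relEntInt_eq G h _ (hE k) _ _ (hq k), EReal.coe_mul]

lemma I_le_cost (G : SimpleGraph V) [DecidableRel G.Adj] (v₁ : V) (δ : ℝ) (ν : ProbMeas V)
    (νs : Fin G.edgeFinset.card → ProbMeas V) (r : Fin G.edgeFinset.card → ℝ)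
    (Es : Fin G.edgeFinset.card → Finset (Sym2 V))
    (qs : Fin G.edgeFinset.card → V → V → ℝ)
    (hE : Es ∈ seqE G v₁) (hr : ∀ k, 0 ≤ r k) (hr1 : ∑ k, r k = 1)
    (hsup : ∀ k x, (νs k).1 x ≠ 0 → memVerts (Es k) x)
    (hν : ∀ x, ∑ k, r k * (νs k).1 x = ν.1 x)
    (hq : ∀ k, qs k ∈ TE (Es k)) (hinv : ∀ k, Invariant (νs k).1 (qs k)) :
    Ifun G v₁ δ ν ≤ ∑ k, ((r k : ℝ) : EReal) * relEntInt (νs k).1 (qs k) (phat G δ (Es k)) :=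
  sInf_le ⟨νs, r, Es, qs, hE, hr, hr1, hsup, hν, hq, hinv, rfl⟩

lemma I_compare (G : SimpleGraph V) [DecidableRel G.Adj] (v₁ : V) {δ δ' c : ℝ}
    (h : 0 < δ) (h' : 0 < δ')
    (hp : ∀ F : Finset (Sym2 V), F ⊆ G.edgeFinset → ∀ x y, s(x, y) ∈ F →
      phat G δ F x y ≤ Real.exp c * phat G δ' F x y) (μ : ProbMeas V) :
    Ifun G v₁ δ' μ ≤ Ifun G v₁ δ μ + ((c : ℝ) : EReal) := by
  rw [← EReal.sub_le_iff_le_add (by simp) (by simp)]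
  refine le_sInf ?_
  rintro _ ⟨νs, r, Es, qs, hE, hr, hr1, hsup, hμ, hq, hinv, rfl⟩
  rw [EReal.sub_le_iff_le_add (by simp) (by simp)]
  refine (I_le_cost G v₁ δ' μ νs r Es qs hE hr hr1 hsup hμ hq hinv).trans ?_
  rw [cost_eq G h _ hE.1 _ _ _ hq, cost_eq G h' _ hE.1 _ _ _ hq, ← EReal.coe_add,
    EReal.coe_le_coe_iff]
  have key : ∀ k, rc (νs k).1 (qs k) (phat G δ' (Es k)) ≤
      rc (νs k).1 (qs k) (phat G δ (Es k)) + c := by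
    intro k
    have hc : c = ∑ x, (νs k).1 x * c := by rw [← Finset.sum_mul, (νs k).2.2, one_mul]
    rw [hc]
    unfold rc
    rw [← Finset.sum_add_distrib]
    refine Finset.sum_le_sum fun x _ => ?_
    by_cases hx : (νs k).1 x = 0
    · simp [hx]
    rw [← mul_add]
    refine mul_le_mul_of_nonneg_left ?_ ((νs k).2.1 x)
    have hc2 : c = ∑ y, qs k x y * c := by
      rw [← Finset.sum_mul, (hq k).2.1 x (hsup k x hx), one_mul]
    conv_rhs => rw [hc2]
    rw [← Finset.sum_add_distrib]
    refine Finset.sum_le_sum fun y _ => ?_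
    by_cases hy : qs k x y = 0
    · simp [hy]
    have hF := (hq k).2.2 x y hy
    have hadj : G.Adj x y := by simpa using hE.1 k hF
    have p1 := phat_pos G h (Es k) hadj
    have p2 := phat_pos G h' (Es k) hadj
    rw [← mul_add]
    refine mul_le_mul_of_nonneg_left ?_ ((hq k).1 x y)
    rw [Real.log_div hy p1.ne', Real.log_div hy p2.ne']
    have := Real.log_le_log p1 (hp (Es k) (hE.1 k) x y hF)
    rw [Real.log_mul (Real.exp_pos c).ne' p2.ne', Real.log_exp] at this
    linarith
  calc ∑ k, r k * rc (νs k).1 (qs k) (phat G δ' (Es k))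
      ≤ ∑ k, r k * (rc (νs k).1 (qs k) (phat G δ (Es k)) + c) :=
        Finset.sum_le_sum fun k _ => mul_le_mul_of_nonneg_left (key k) (hr k)
    _ = _ := by simp_rw [mul_add]; rw [Finset.sum_add_distrib, ← Finset.sum_mul, hr1, one_mul]

lemma phat_ratio (G : SimpleGraph V) [DecidableRel G.Adj] {δ δ' t : ℝ}
    (h : 0 < δ) (h' : 0 < δ') (F : Finset (Sym2 V)) (hF : F ⊆ G.edgeFinset)
    (x y : V) (hxy : s(x, y) ∈ F)
    (ht : ∀ e, δ * gw δ' F e ≤ t * δ' * gw δ F e) :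
    phat G δ F x y ≤ t * phat G δ' F x y := by
  have hadj : G.Adj x y := by simpa using hF hxy
  have d1 := den_pos G h F hadj
  have d2 := den_pos G h' F hadj
  unfold phat
  rw [if_pos hadj, if_pos hadj]
  have g1 : gw δ F s(x, y) = δ := by simp [gw, hxy]
  have g2 : gw δ' F s(x, y) = δ' := by simp [gw, hxy]
  rw [g1, g2, ← mul_div_assoc, div_le_div_iff₀ d1 d2, Finset.mul_sum, Finset.mul_sum]
  exact Finset.sum_le_sum fun z _ => ht _

lemma I_anti (G : SimpleGraph V) [DecidableRel G.Adj] (v₁ : V) {δ δ' : ℝ}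
    (h : 0 < δ) (hle : δ ≤ δ') (μ : ProbMeas V) :
    Ifun G v₁ δ' μ ≤ Ifun G v₁ δ μ := by
  have h' : 0 < δ' := h.trans_le hle
  have := I_compare G v₁ (c := 0) h h' (fun F hF x y hxy =>
    phat_ratio G h h' F hF x y hxy (fun e => by
      rw [Real.exp_zero]; unfold gw; split_ifs <;> linarith)) μ
  simpa using this

lemma I_lip (G : SimpleGraph V) [DecidableRel G.Adj] (v₁ : V) {δ δ' : ℝ}
    (h : 1 ≤ δ) (hle : δ ≤ δ') (μ : ProbMeas V) :
    Ifun G v₁ δ μ ≤ Ifun G v₁ δ' μ + ((δ' - δ : ℝ) : EReal) := by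
  have h0 : 0 < δ := by linarith
  have h' : 0 < δ' := h0.trans_le hle
  refine I_compare G v₁ h' h0 (fun F hF x y hxy =>
    phat_ratio G h' h0 F hF x y hxy (fun e => ?_)) μ
  have e1 : δ' - δ + 1 ≤ Real.exp (δ' - δ) := Real.add_one_le_exp _
  have e2 : δ' ≤ Real.exp (δ' - δ) * δ := by nlinarith
  unfold gw; split_ifs
  · nlinarith
  · linarith

lemma phat_full (G : SimpleGraph V) [DecidableRel G.Adj] {δ : ℝ} (h : 0 < δ)
    (F : Finset (Sym2 V)) {x y : V} (hxy : G.Adj x y) :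
    phat G δ G.edgeFinset x y = phat G 1 F x y := by
  unfold phat
  rw [if_pos hxy, if_pos hxy]
  have e1 : ∀ z ∈ G.neighborFinset x, gw δ G.edgeFinset s(x, z) = δ := by
    intro z hz
    simp only [SimpleGraph.mem_neighborFinset] at hz
    simp [gw, hz]
  have e2 : ∀ e, gw 1 F e = 1 := by intro e; simp [gw]
  rw [Finset.sum_congr rfl e1, e1 y (by simpa using hxy)]
  simp only [e2, Finset.sum_const, nsmul_eq_mul, mul_one]
  have : ((G.neighborFinset x).card : ℝ) ≠ 0 := by
    have : y ∈ G.neighborFinset x := by simpa using hxy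
    have := Finset.card_pos.2 ⟨y, this⟩
    positivity
  field_simp

lemma I_le_one (G : SimpleGraph V) [DecidableRel G.Adj] (v₁ : V) {δ : ℝ}
    (h : 0 < δ) (μ : ProbMeas V) :
    Ifun G v₁ δ μ ≤ Ifun G v₁ 1 μ := by
  refine le_sInf ?_
  rintro _ ⟨νs, r, Es, qs, hE, hr, hr1, hsup, hμ, hq, hinv, rfl⟩
  have hb : 0 < G.edgeFinset.card := by
    rcases Nat.eq_zero_or_pos G.edgeFinset.card with h0 | h0
    · exfalso
      haveI : IsEmpty (Fin G.edgeFinset.card) := by rw [h0]; infer_instance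
      rw [Finset.univ_eq_empty, Finset.sum_empty] at hr1
      exact zero_ne_one hr1
    · exact h0
  obtain ⟨L, hL⟩ : ∃ L : Fin G.edgeFinset.card, (L : ℕ) + 1 = G.edgeFinset.card :=
    ⟨⟨G.edgeFinset.card - 1, by omega⟩, by simp; omega⟩
  have hEL : Es L = G.edgeFinset :=
    Finset.eq_of_subset_of_card_le (hE.1 L) (by rw [hE.2.1 L]; omega)
  set w : Fin G.edgeFinset.card → V → ℝ := fun k x => r k * (νs k).1 x with hw
  have hw0 : ∀ k x, 0 ≤ w k x := fun k x => mul_nonneg (hr k) ((νs k).2.1 x)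
  have hμw : ∀ x, ∑ k, w k x = μ.1 x := hμ
  have hwz : ∀ x, μ.1 x = 0 → ∀ k, w k x = 0 := fun x hx k =>
    (Finset.sum_eq_zero_iff_of_nonneg (fun k _ => hw0 k x)).1 ((hμw x).trans hx) k
      (Finset.mem_univ k)
  have hwrow : ∀ k x, w k x ≠ 0 → ∑ y, qs k x y = 1 := fun k x hx =>
    (hq k).2.1 x (hsup k x (right_ne_zero_of_mul hx))
  set Q : V → V → ℝ := fun x y =>
    if μ.1 x = 0 then qs L x y else ∑ k, w k x / μ.1 x * qs k x y with hQ
  have hμQ : ∀ x y, μ.1 x * Q x y = ∑ k, w k x * qs k x y := by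
    intro x y
    by_cases hx : μ.1 x = 0
    · simp [hx, hwz x hx]
    · simp only [hQ, if_neg hx, Finset.mul_sum]
      refine Finset.sum_congr rfl fun k _ => ?_
      field_simp
  have hQT : Q ∈ TE (Es L) := by
    refine ⟨fun x y => ?_, fun x hx => ?_, fun x y hxy => ?_⟩
    · simp only [hQ]
      split_ifs
      · exact (hq L).1 x y
      · exact Finset.sum_nonneg fun k _ =>
          mul_nonneg (div_nonneg (hw0 k x) (μ.2.1 x)) ((hq k).1 x y)
    · by_cases h0 : μ.1 x = 0
      · simp only [hQ, if_pos h0]; exact (hq L).2.1 x hx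
      · have : μ.1 x * ∑ y, Q x y = μ.1 x * 1 := by
          rw [Finset.mul_sum, Finset.sum_congr rfl (fun y _ => hμQ x y), Finset.sum_comm,
            mul_one]
          conv_rhs => rw [← hμw x]
          refine Finset.sum_congr rfl fun k _ => ?_
          rw [← Finset.mul_sum]
          by_cases hk : w k x = 0
          · simp [hk]
          · rw [hwrow k x hk, mul_one]
        exact mul_left_cancel₀ h0 this
    · simp only [hQ] at hxy
      split_ifs at hxy with h0
      · exact (hq L).2.2 x y hxy
      · obtain ⟨k, _, hk⟩ := Finset.exists_ne_zero_of_sum_ne_zero hxy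
        rw [hEL]
        exact hE.1 k ((hq k).2.2 x y (right_ne_zero_of_mul hk))
  have hQinv : Invariant μ.1 Q := by
    intro y
    rw [Finset.sum_congr rfl (fun x _ => hμQ x y), Finset.sum_comm, ← hμw y]
    refine Finset.sum_congr rfl fun k _ => ?_
    simp only [hw, mul_assoc]
    rw [← Finset.mul_sum, hinv k y]
  have hμsup : ∀ x, μ.1 x ≠ 0 → memVerts (Es L) x := by
    intro x hx
    rw [← hμw x] at hx
    obtain ⟨k, _, hk⟩ := Finset.exists_ne_zero_of_sum_ne_zero hx
    obtain ⟨e, he, hxe⟩ := hsup k x (right_ne_zero_of_mul hk)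
    exact ⟨e, hEL ▸ hE.1 k he, hxe⟩
  set νs' := Function.update νs L μ with hνs'
  set qs' := Function.update qs L Q with hqs'
  set r' : Fin G.edgeFinset.card → ℝ := fun k => if k = L then 1 else 0 with hr'
  have hq' : ∀ k, qs' k ∈ TE (Es k) := by
    intro k
    by_cases hk : k = L
    · subst hk; simpa [hqs'] using hQT
    · simpa [hqs', hk] using hq k
  refine (I_le_cost G v₁ δ μ νs' r' Es qs' hE ?_ ?_ ?_ ?_ hq' ?_).trans ?_
  · intro k; simp only [hr']; split_ifs <;> norm_num
  · simp [hr']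
  · intro k x hx
    by_cases hk : k = L
    · subst hk; exact hμsup x (by simpa [hνs'] using hx)
    · exact hsup k x (by simpa [hνs', hk] using hx)
  · intro x; simp [hr', hνs']
  · intro k
    by_cases hk : k = L
    · subst hk; simpa [hqs', hνs'] using hQinv
    · simpa [hqs', hνs', hk] using hinv k
  rw [cost_eq G h _ hE.1 _ _ _ hq', cost_eq G one_pos _ hE.1 _ _ _ hq, EReal.coe_le_coe_iff]
  have hlhs : ∑ k, r' k * rc (νs' k).1 (qs' k) (phat G δ (Es k)) =
      rc μ.1 Q (phat G δ G.edgeFinset) := by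
    simp [hr', hνs', hqs', hEL]
  rw [hlhs]
  have hrhs : ∑ k, r k * rc (νs k).1 (qs k) (phat G 1 (Es k)) =
      ∑ x, ∑ y, ∑ k, w k x * (qs k x y * Real.log (qs k x y / phat G 1 (Es k) x y)) := by
    unfold rc
    simp only [Finset.mul_sum]
    rw [Finset.sum_comm]
    refine Finset.sum_congr rfl fun x _ => ?_
    rw [Finset.sum_comm]
    refine Finset.sum_congr rfl fun y _ => Finset.sum_congr rfl fun k _ => ?_
    simp only [hw]; ring
  rw [hrhs]
  unfold rc
  refine Finset.sum_le_sum fun x _ => ?_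
  by_cases hx : μ.1 x = 0
  · simp [hx, hwz x hx]
  have hxp : 0 < μ.1 x := lt_of_le_of_ne (μ.2.1 x) (Ne.symm hx)
  rw [Finset.mul_sum]
  refine Finset.sum_le_sum fun y _ => ?_
  by_cases hadj : G.Adj x y
  swap
  · have hz : ∀ k, qs k x y = 0 := fun k => by
      by_contra hne
      exact hadj (by simpa using hE.1 k ((hq k).2.2 x y hne))
    have hzQ : Q x y = 0 := by simp [hQ, hz]
    simp [hz, hzQ]
  set p := phat G δ G.edgeFinset x y with hpdef
  have hp : 0 < p := phat_pos G h _ hadj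
  have hpk : ∀ k, phat G 1 (Es k) x y = p := fun k => (phat_full G h (Es k) hadj).symm
  simp only [hpk]
  have hlog : ∀ t : ℝ, t * Real.log (t / p) = t * Real.log t - t * Real.log p := by
    intro t
    by_cases ht : t = 0
    · simp [ht]
    · rw [Real.log_div ht hp.ne']; ring
  have hJ := Real.convexOn_mul_log.map_sum_le (t := Finset.univ)
    (w := fun k => w k x / μ.1 x) (p := fun k => qs k x y)
    (fun k _ => div_nonneg (hw0 k x) hxp.le)
    (by rw [← Finset.sum_div, hμw x, div_self hx])
    (fun k _ => (hq k).1 x y)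
  simp only [smul_eq_mul] at hJ
  have hQe : Q x y = ∑ k, w k x / μ.1 x * qs k x y := by simp [hQ, hx]
  rw [← hQe] at hJ
  have hJ2 := mul_le_mul_of_nonneg_left hJ hxp.le
  have hsum : μ.1 x * ∑ k, w k x / μ.1 x * (qs k x y * Real.log (qs k x y)) =
      ∑ k, w k x * (qs k x y * Real.log (qs k x y)) := by
    rw [Finset.mul_sum]
    refine Finset.sum_congr rfl fun k _ => ?_
    field_simp
  rw [hsum] at hJ2
  simp only [hlog, mul_sub, Finset.sum_sub_distrib]
  have : ∑ k, w k x * (qs k x y * Real.log p) = μ.1 x * (Q x y * Real.log p) := by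
    rw [← mul_assoc, hμQ x y, Finset.sum_mul]
    exact Finset.sum_congr rfl fun k _ => by ring
  rw [this]
  linarith

lemma I_upper (G : SimpleGraph V) [DecidableRel G.Adj] (v₁ : V) {δ₁ δ₂ ε : ℝ}
    (h₁ : 0 < δ₁) (h₂ : 0 < δ₂) (he : 0 < ε) (hd : |δ₁ - δ₂| < ε) (μ : ProbMeas V) :
    Ifun G v₁ δ₁ μ ≤ Ifun G v₁ δ₂ μ + ((ε : ℝ) : EReal) := by
  have hz : ∀ a : EReal, a ≤ a + ((ε : ℝ) : EReal) := fun a =>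
    le_add_of_nonneg_right (by exact_mod_cast he.le)
  have hd' := abs_lt.1 hd
  rcases le_total δ₂ δ₁ with hle | hle
  · exact (I_anti G v₁ h₂ hle μ).trans (hz _)
  rcases le_total δ₂ 1 with h21 | h21
  · exact ((I_le_one G v₁ h₁ μ).trans (I_anti G v₁ h₂ h21 μ)).trans (hz _)
  rcases le_total δ₁ 1 with h11 | h11
  · refine (I_le_one G v₁ h₁ μ).trans ((I_lip G v₁ le_rfl h21 μ).trans ?_)
    exact add_le_add le_rfl (by exact_mod_cast (by linarith : δ₂ - 1 ≤ ε))
  · refine (I_lip G v₁ h11 hle μ).trans ?_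
    exact add_le_add le_rfl (by exact_mod_cast (by linarith : δ₂ - δ₁ ≤ ε))

end Aux

/-- Uniform continuity of `δ ↦ I_δ` on `{I₁ < ∞}`. -/
theorem orrw_rate_uniform_continuous {V : Type} [Fintype V] [DecidableEq V]
    (G : SimpleGraph V) [DecidableRel G.Adj] (hG : G.Connected)
    (hV : 3 ≤ Fintype.card V) (v₁ : V) :
    ∀ ε : ℝ, 0 < ε → ∃ η : ℝ, 0 < η ∧
      ∀ δ₁ δ₂ : ℝ, 0 < δ₁ → 0 < δ₂ → |δ₁ - δ₂| < η →
        ∀ μ : ProbMeas V, Ifun G v₁ 1 μ < ⊤ →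
          Ifun G v₁ δ₁ μ ≤ Ifun G v₁ δ₂ μ + ((ε : ℝ) : EReal) ∧
          Ifun G v₁ δ₂ μ ≤ Ifun G v₁ δ₁ μ + ((ε : ℝ) : EReal) := by
  intro ε he
  refine ⟨ε, he, fun δ₁ δ₂ h₁ h₂ hd μ _ => ⟨I_upper G v₁ h₁ h₂ he hd μ, ?_⟩⟩
  exact I_upper G v₁ h₂ h₁ he (by rwa [abs_sub_comm]) μ

end ORRW
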